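/- The negative log-probit-likelihood function x ↦ −log Φ_pro(x) is convex on ℝ. -/

import Mathlib

/-!
The derivative of `-log Φ` is `-N / Φ`, so convexity amounts to `N / Φ` being antitone.
For `x ≤ y`, translating the integral gives `Φ x = ∫_{s ≤ y} N (s + (x - y)) ds`, and the
log-concavity of the Gaussian density gives `N y * N (s + (x - y)) ≤ N x * N s` for `s ≤ y`.
Integrating over `s ≤ y` yields `N y * Φ x ≤ N x * Φ y` (`stdN_mul_PhiPro_le`), which is the claim.
-/

/-- The standard normal probability density function. -/
noncomputable def stdN (x : ℝ) : ℝ := (Real.sqrt (2 * Real.pi))⁻¹ * Real.exp (-x ^ 2 / 2)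

/-- The standard normal cumulative distribution function (inverse probit link). -/
noncomputable def PhiPro (x : ℝ) : ℝ := ∫ t in Set.Iic x, stdN t

open MeasureTheory Set

lemma stdN_pos (x : ℝ) : 0 < stdN x := by
  unfold stdN
  positivity

lemma continuous_stdN : Continuous stdN := by
  unfold stdN
  fun_prop

lemma integrable_stdN : Integrable stdN := by
  unfold stdN
  refine Integrable.const_mul ?_ _
  convert integrable_exp_neg_mul_sq (b := 1 / 2) (by norm_num) using 3
  ring

lemma PhiPro_pos (x : ℝ) : 0 < PhiPro x := by
  unfold PhiPro
  rw [setIntegral_pos_iff_support_of_nonneg_ae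
    (Filter.Eventually.of_forall fun t => (stdN_pos t).le) integrable_stdN.integrableOn]
  have hs : Function.support stdN = univ :=
    eq_univ_of_forall fun t => (stdN_pos t).ne'
  simp [hs]

lemma hasDerivAt_PhiPro (x : ℝ) : HasDerivAt PhiPro (stdN x) x := by
  have h : PhiPro = fun u => PhiPro 0 + ∫ t in (0 : ℝ)..u, stdN t := by
    funext u
    have := intervalIntegral.integral_Iic_sub_Iic (μ := volume) (a := 0) (b := u)
      integrable_stdN.integrableOn integrable_stdN.integrableOn
    unfold PhiPro
    linarith
  rw [h]
  exact (intervalIntegral.integral_hasDerivAt_right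
    (continuous_stdN.intervalIntegrable _ _)
    (continuous_stdN.stronglyMeasurableAtFilter _ _)
    continuous_stdN.continuousAt).const_add _

lemma PhiPro_eq_translate (x y : ℝ) : PhiPro x = ∫ s in Iic y, stdN (s + (x - y)) := by
  have h := (measurePreserving_add_right volume (x - y)).setIntegral_preimage_emb
    (measurableEmbedding_addRight (x - y)) stdN (Iic x)
  rw [PhiPro, ← h]
  congr 2
  simp

/-- Log-concavity of the Gaussian density: the outer pair `y`, `s + (x - y)` has the same sum as the
inner pair `x`, `s`. -/
lemma stdN_mul_le {x y s : ℝ} (hxy : x ≤ y) (hs : s ≤ y) :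
    stdN y * stdN (s + (x - y)) ≤ stdN x * stdN s := by
  unfold stdN
  rw [mul_mul_mul_comm, mul_mul_mul_comm _ (Real.exp (-x ^ 2 / 2)), ← Real.exp_add, ← Real.exp_add]
  refine mul_le_mul_of_nonneg_left (Real.exp_le_exp.2 ?_) (by positivity)
  nlinarith [mul_nonneg (sub_nonneg.2 hxy) (sub_nonneg.2 hs)]

lemma stdN_mul_PhiPro_le {x y : ℝ} (hxy : x ≤ y) : stdN y * PhiPro x ≤ stdN x * PhiPro y := by
  rw [PhiPro_eq_translate x y, PhiPro, ← integral_const_mul, ← integral_const_mul]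
  exact setIntegral_mono_on
    ((integrable_stdN.comp_add_right (x - y)).const_mul _).integrableOn
    (integrable_stdN.const_mul _).integrableOn measurableSet_Iic
    fun s hs => stdN_mul_le hxy hs

/-- The negative log-probit-likelihood `x ↦ -log Φ_pro(x)` is convex on `ℝ`. -/
theorem stmt17 : ConvexOn ℝ Set.univ (fun x : ℝ => -Real.log (PhiPro x)) := by
  have hd (x : ℝ) : HasDerivAt (fun x : ℝ => -Real.log (PhiPro x)) (-(stdN x / PhiPro x)) x :=
    ((hasDerivAt_PhiPro x).log (PhiPro_pos x).ne').neg
  refine Monotone.convexOn_univ_of_deriv (fun x => (hd x).differentiableAt) fun x y hxy => ?_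
  rw [(hd x).deriv, (hd y).deriv, neg_le_neg_iff, div_le_div_iff₀ (PhiPro_pos y) (PhiPro_pos x)]
  exact stdN_mul_PhiPro_le hxy
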